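/- Let f_l : ℝⁿ → ℝ (l = 1,…,p), g_i : ℝⁿ → ℝ (i = 1,…,m) and h_j : ℝⁿ → ℝ (j = 1,…,r) be continuously differentiable. If x̄ is a local weak efficient solution of (MOP), then there exist sequences {x^k} ⊂ ℝⁿ, {(λ^k, μ^k, τ^k)} ⊂ ℝ^p_+ × ℝ^m_+ × ℝ^r and positive reals b_k, c_k > 0 (and sign choices ε_j ∈ {−1, 1} for the equality constraints) such that: x^k → x̄; Σ_{l=1}^p λ_l^k = 1; ‖Σ_{l=1}^p λ_l^k ∇f_l(x^k) + Σ_{i=1}^m μ_i^k ∇g_i(x^k) + Σ_{j=1}^r τ_j^k ε_j ∇h_j(x^k)‖ → 0; for each i with g_i(x̄) < 0 one has μ_i^k = 0 for all large k; (E1) μ_i^k = b_k · max(g_i(x^k), 0) ≥ 0 for all i and τ_j^k = c_k · ε_j h_j(x^k) ≥ 0 for all j and all k; and (E2) f_l(x^k) − f_l(x̄) + (1/2)[Σ_{i=1}^m μ_i^k g_i(x^k) + Σ_{j=1}^r τ_j^k ε_j h_j(x^k)] ≤ 0 for every k and every l = 1,…,p. -/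

import Mathlib

open Filter Topology

/-!
Quadratic penalization of the constraints, regularized by `‖x - x₀‖ ^ 2 / 2`, gives on a small ball
around `x₀` a point `x` minimizing the largest of the increments of the penalized objectives.
The comparison with `x₀` is (E2). For a large penalty weight `K` the increments cannot all be
nonpositive on the bounding sphere, so `x` is interior, hence locally weakly efficient without
constraints, and Fermat's rule (through Gordan's alternative) makes a convex combination of the
penalized derivatives vanish. The derivative of the penalty provides the multipliers
`K * max (g i x) 0` and `K * h j x`, and that of the regularization is the residual, of norm
`‖x - x₀‖`. Shrinking the ball gives the sequence; along a subsequence the signs of the `h j` are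
constant.
-/

section WeakEfficiency

variable {ι X : Type*} [TopologicalSpace X]

/-- `x` is a local weak efficient solution of minimizing the objectives `F l` over `S`: no point of
`S` near `x` improves all objectives strictly. Membership of `x` in `S` is not part of the
definition. -/
def IsLocalWeakEfficientOn (F : ι → X → ℝ) (S : Set X) (x : X) : Prop :=
  ∀ᶠ y in 𝓝[S] x, ∃ l, F l x ≤ F l y

theorem isLocalWeakEfficientOn_iff {F : ι → X → ℝ} {S : Set X} {x : X} :
    IsLocalWeakEfficientOn F S x ↔ ∃ U ∈ 𝓝 x, ∀ y ∈ U, y ∈ S → ¬∀ l, F l y < F l x := by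
  simp_rw [IsLocalWeakEfficientOn, eventually_nhdsWithin_iff, not_forall, not_lt]
  exact eventually_iff_exists_mem

theorem IsLocalWeakEfficientOn.nonempty {F : ι → X → ℝ} {S : Set X} {x : X}
    (hx : IsLocalWeakEfficientOn F S x) (hxS : x ∈ S) : Nonempty ι :=
  (hx.self_of_nhdsWithin hxS).nonempty

end WeakEfficiency

section FermatRule

theorem eventually_lt_of_hasDerivAt_neg {F : ℝ → ℝ} {F' t₀ : ℝ} (hF : HasDerivAt F F' t₀)
    (hF' : F' < 0) : ∀ᶠ t in 𝓝[>] t₀, F t < F t₀ := by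
  have hslope : Tendsto (slope F t₀) (𝓝[>] t₀) (𝓝 F') :=
    (hasDerivWithinAt_iff_tendsto_slope' (by simp)).1 hF.hasDerivWithinAt
  filter_upwards [hslope.eventually_lt_const hF', self_mem_nhdsWithin] with t ht htt₀
  rw [slope_def_field, div_lt_iff₀ (sub_pos.2 htt₀), zero_mul] at ht
  exact sub_neg.1 ht

/-- Gordan's theorem of the alternative. -/
theorem exists_forall_neg_or_exists_mem_stdSimplex {ι E : Type*} [Fintype ι] [AddCommGroup E]
    [Module ℝ E] [TopologicalSpace E] (φ : ι → StrongDual ℝ E) :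
    (∃ d, ∀ l, φ l d < 0) ∨ ∃ w ∈ stdSimplex ℝ ι, ∑ l, w l • φ l = 0 := by
  classical
  refine or_iff_not_imp_right.2 fun hne => ?_
  have : LocallyConvexSpace ℝ (WeakDual ℝ E) :=
    inferInstanceAs (LocallyConvexSpace ℝ (WeakBilin (topDualPairing ℝ E)))
  let L : (ι → ℝ) →ₗ[ℝ] WeakDual ℝ E :=
    Fintype.linearCombination ℝ fun l => StrongDual.toWeakDual (φ l)
  have h0 : (0 : WeakDual ℝ E) ∉ L '' stdSimplex ℝ ι := by
    rintro ⟨w, hw, hw0⟩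
    refine hne ⟨w, hw, StrongDual.toWeakDual.injective ?_⟩
    simpa [L, Fintype.linearCombination_apply] using hw0
  obtain ⟨ψ, u, hψu, hu⟩ := geometric_hahn_banach_closed_point
    ((convex_stdSimplex ℝ ι).linear_image L)
    ((isCompact_stdSimplex ℝ ι).image L.continuous_of_finiteDimensional).isClosed h0
  rw [map_zero] at hu
  -- The weak-* topology is used because its continuous functionals are evaluations.
  obtain ⟨d, rfl⟩ := LinearMap.dualEmbedding_surjective (topDualPairing ℝ E) ψ
  refine ⟨d, fun l => ?_⟩
  have hl := (hψu _ ⟨Pi.single l 1, single_mem_stdSimplex ℝ l, rfl⟩).trans hu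
  rw [Fintype.linearCombination_apply_single, one_smul] at hl
  exact hl

theorem IsLocalWeakEfficientOn.exists_mem_stdSimplex_sum_smul_eq_zero {ι E : Type*} [Fintype ι]
    [NormedAddCommGroup E] [NormedSpace ℝ E] {F : ι → E → ℝ} {F' : ι → StrongDual ℝ E} {x : E}
    (hx : IsLocalWeakEfficientOn F Set.univ x) (hF : ∀ l, HasFDerivAt (F l) (F' l) x) :
    ∃ w ∈ stdSimplex ℝ ι, ∑ l, w l • F' l = 0 := by
  refine (exists_forall_neg_or_exists_mem_stdSimplex F').resolve_left fun ⟨d, hd⟩ => ?_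
  have hdescent : ∀ᶠ t : ℝ in 𝓝[>] 0, ∀ l, F l (x + t • d) < F l x :=
    eventually_all.2 fun l => by
      simpa using eventually_lt_of_hasDerivAt_neg ((hF l).hasLineDerivAt d) (hd l)
  have hline : Tendsto (fun t : ℝ => x + t • d) (𝓝[>] 0) (𝓝 x) := by
    have : Continuous fun t : ℝ => x + t • d := by fun_prop
    simpa using (this.tendsto 0).mono_left nhdsWithin_le_nhds
  rw [IsLocalWeakEfficientOn, nhdsWithin_univ] at hx
  obtain ⟨t, ht, l, hl⟩ := (hdescent.and (hline.eventually hx)).exists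
  exact (ht l).not_ge hl

end FermatRule

section Penalization

theorem exists_mem_interior_isLocalWeakEfficientOn_univ {ι X : Type*} [Finite ι] [Nonempty ι]
    [TopologicalSpace X] {F : ι → X → ℝ} {S : Set X} {x₀ : X} (hS : IsCompact S)
    (hF : ∀ l, ContinuousOn (F l) S) (hx₀ : x₀ ∈ S)
    (hbdry : ∀ y ∈ S \ interior S, ∃ l, F l x₀ < F l y) :
    ∃ x ∈ interior S, (∀ l, F l x ≤ F l x₀) ∧ IsLocalWeakEfficientOn F Set.univ x := by
  have := Fintype.ofFinite ι
  let Φ : X → ℝ := fun y => Finset.univ.sup' Finset.univ_nonempty fun l => F l y - F l x₀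
  have le_Φ : ∀ y l, F l y - F l x₀ ≤ Φ y := fun y l =>
    Finset.le_sup' (fun l => F l y - F l x₀) (Finset.mem_univ l)
  have hΦ : ContinuousOn Φ S :=
    ContinuousOn.finset_sup'_apply _ fun l _ => (hF l).sub continuousOn_const
  obtain ⟨x, hxS, hmin⟩ := hS.exists_isMinOn ⟨x₀, hx₀⟩ hΦ
  have hxx₀ : ∀ l, F l x ≤ F l x₀ := fun l => by
    have hΦx₀ : Φ x₀ = 0 := by simp [Φ]
    have := (le_Φ x l).trans (hmin hx₀)
    linarith
  have hxint : x ∈ interior S := by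
    by_contra hx
    obtain ⟨l, hl⟩ := hbdry x ⟨hxS, hx⟩
    exact hl.not_ge (hxx₀ l)
  refine ⟨x, hxint, hxx₀, ?_⟩
  rw [IsLocalWeakEfficientOn, nhdsWithin_univ]
  filter_upwards [mem_interior_iff_mem_nhds.1 hxint] with y hy
  obtain ⟨l, -, hl⟩ := Finset.exists_mem_eq_sup' Finset.univ_nonempty fun l => F l y - F l x₀
  exact ⟨l, (sub_le_sub_iff_right _).1 ((le_Φ x l).trans ((hmin hy).trans_eq hl))⟩

theorem eventually_forall_exists_pos_add_mul {ι X : Type*} [Nonempty ι] [TopologicalSpace X]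
    {A : ι → X → ℝ} {P : X → ℝ} {S : Set X} (hS : IsCompact S) (hA : ∀ l, ContinuousOn (A l) S)
    (hP : ContinuousOn P S) (hP0 : ∀ y ∈ S, 0 ≤ P y) (hpos : ∀ y ∈ S, P y = 0 → ∃ l, 0 < A l y) :
    ∀ᶠ K : ℝ in atTop, ∀ y ∈ S, ∃ l, 0 < A l y + K * P y := by
  have hpoint : ∀ y ∈ S, ∃ l, ∃ K : ℝ, 0 < A l y + K * P y := fun y hy => by
    rcases (hP0 y hy).eq_or_lt with hPy | hPy
    · exact (hpos y hy hPy.symm).imp fun l hl => ⟨0, by simpa using hl⟩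
    · refine ⟨Classical.arbitrary ι, (1 - A (Classical.arbitrary ι) y) / P y, ?_⟩
      rw [div_mul_cancel₀ _ hPy.ne']
      linarith
  let PosOn (T : Set X) : Prop := ∀ᶠ K : ℝ in atTop, ∀ y ∈ T, y ∈ S → ∃ l, 0 < A l y + K * P y
  suffices h : PosOn S from h.mono fun K hK y hy => hK y hy hy
  refine hS.induction_on (by simp [PosOn])
    (fun T T' hTT' h => h.mono fun K hK y hy => hK y (hTT' hy))
    (fun T T' h h' => (h.and h').mono fun K hK y hy => hy.elim (hK.1 y) (hK.2 y)) fun y hy => ?_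
  obtain ⟨l, K₀, hK₀⟩ := hpoint y hy
  have hcont : ContinuousWithinAt (fun z => A l z + K₀ * P z) S y :=
    ((hA l).add (hP.const_mul K₀)) y hy
  refine ⟨_, hcont.eventually_const_lt hK₀, ?_⟩
  filter_upwards [eventually_ge_atTop K₀] with K hK z hz hzS
  have hPz := hP0 z hzS
  exact ⟨l, lt_of_lt_of_le hz (by gcongr)⟩

theorem exists_penalized_isLocalWeakEfficientOn_univ {ι E : Type*} [Finite ι] [Nonempty ι]
    [NormedAddCommGroup E] [NormedSpace ℝ E] [ProperSpace E] {F : ι → E → ℝ} {P : E → ℝ} {x₀ : E}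
    {δ : ℝ} (hδ : 0 < δ) (hF : ∀ l, ContinuousOn (F l) (Metric.closedBall x₀ δ))
    (hP : ContinuousOn P (Metric.closedBall x₀ δ)) (hP0 : ∀ y, 0 ≤ P y) (hPx₀ : P x₀ = 0)
    (hx₀ : ∀ y ∈ Metric.closedBall x₀ δ, P y = 0 → ∃ l, F l x₀ ≤ F l y) :
    ∃ K > 0, ∃ x ∈ Metric.ball x₀ δ, (∀ l, F l x - F l x₀ + K * P x ≤ 0) ∧
      IsLocalWeakEfficientOn (fun l y => F l y + K * P y + ‖y - x₀‖ ^ 2 / 2) Set.univ x := by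
  have hsub : Metric.sphere x₀ δ ⊆ Metric.closedBall x₀ δ := Metric.sphere_subset_closedBall
  obtain ⟨K, hKsphere, hK⟩ := ((eventually_forall_exists_pos_add_mul
    (A := fun l y => F l y - F l x₀ + ‖y - x₀‖ ^ 2 / 2) (isCompact_sphere x₀ δ)
    (fun l => (((hF l).mono hsub).sub continuousOn_const).add (by fun_prop)) (hP.mono hsub)
    (fun y _ => hP0 y) fun y hy hPy => (hx₀ y (hsub hy) hPy).imp fun l hl => by
      have hδy : 0 < ‖y - x₀‖ := by rwa [mem_sphere_iff_norm.1 hy]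
      have : 0 < ‖y - x₀‖ ^ 2 := by positivity
      linarith).and (eventually_gt_atTop 0)).exists
  obtain ⟨x, hx, hle, hloc⟩ := exists_mem_interior_isLocalWeakEfficientOn_univ
    (F := fun l y => F l y + K * P y + ‖y - x₀‖ ^ 2 / 2) (isCompact_closedBall x₀ δ)
    (fun l => ((hF l).add (hP.const_mul K)).add (by fun_prop))
    (Metric.mem_closedBall_self hδ.le) fun y hy => by
      rw [interior_closedBall _ hδ.ne', Metric.closedBall_sdiff_ball] at hy
      refine (hKsphere y hy).imp fun l hl => ?_
      simp only [hPx₀, sub_self, norm_zero]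
      linarith
  rw [interior_closedBall _ hδ.ne'] at hx
  refine ⟨K, hK, x, hx, fun l => ?_, hloc⟩
  have hl : F l x + K * P x + ‖x - x₀‖ ^ 2 / 2 ≤ F l x₀ := by simpa [hPx₀] using hle l
  linarith [sq_nonneg ‖x - x₀‖]

end Penalization

section QuadraticPenalty

variable {ι κ X : Type*}

/-- The points satisfying the inequality constraints `g i ≤ 0` and the equality constraints
`h j = 0`. -/
def feasibleSet (g : ι → X → ℝ) (h : κ → X → ℝ) : Set X :=
  {x | (∀ i, g i x ≤ 0) ∧ ∀ j, h j x = 0}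

variable [Fintype ι] [Fintype κ]

/-- The quadratic (Courant) penalty of the constraints `g i ≤ 0` and `h j = 0`. The factor `1 / 2`
makes its derivative a combination of the `g i'` and `h j'` with the constraint violations as
coefficients. -/
noncomputable def quadraticPenalty (g : ι → X → ℝ) (h : κ → X → ℝ) (x : X) : ℝ :=
  (∑ i, max (g i x) 0 ^ 2 + ∑ j, h j x ^ 2) / 2

theorem quadraticPenalty_nonneg (g : ι → X → ℝ) (h : κ → X → ℝ) (x : X) :
    0 ≤ quadraticPenalty g h x := by
  unfold quadraticPenalty
  positivity

theorem quadraticPenalty_eq_zero_iff {g : ι → X → ℝ} {h : κ → X → ℝ} {x : X} :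
    quadraticPenalty g h x = 0 ↔ x ∈ feasibleSet g h := by
  have hg : 0 ≤ ∑ i, max (g i x) 0 ^ 2 := by positivity
  have hh : 0 ≤ ∑ j, h j x ^ 2 := by positivity
  rw [quadraticPenalty, div_eq_zero_iff, or_iff_left two_ne_zero, add_eq_zero_iff_of_nonneg hg hh,
    Finset.sum_eq_zero_iff_of_nonneg fun _ _ => sq_nonneg _,
    Finset.sum_eq_zero_iff_of_nonneg fun _ _ => sq_nonneg _]
  simp [feasibleSet]

theorem half_mul_sum_penalty_multipliers_mul_eq (g : ι → X → ℝ) (h : κ → X → ℝ)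
    {ε : κ → ℝ} (hε : ∀ j, ε j * ε j = 1) (K : ℝ) (x : X) :
    1 / 2 * (∑ i, K * max (g i x) 0 * g i x + ∑ j, K * (ε j * h j x) * (ε j * h j x))
      = K * quadraticPenalty g h x := by
  have hmax : ∀ i, K * max (g i x) 0 * g i x = K * max (g i x) 0 ^ 2 := fun i => by
    rcases le_total (g i x) 0 with hi | hi
    · simp [hi]
    · rw [max_eq_left hi]
      ring
  have hsign : ∀ j, K * (ε j * h j x) * (ε j * h j x) = K * h j x ^ 2 := fun j => by
    linear_combination K * h j x ^ 2 * hε j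
  simp only [hmax, hsign, ← Finset.mul_sum, quadraticPenalty]
  ring

theorem hasDerivAt_max_zero_sq (t : ℝ) :
    HasDerivAt (fun s : ℝ => max s 0 ^ 2) (2 * max t 0) t := by
  rcases lt_trichotomy t 0 with ht | rfl | ht
  · rw [max_eq_right ht.le, mul_zero]
    refine (hasDerivAt_const t (0 : ℝ)).congr_of_eventuallyEq ?_
    filter_upwards [eventually_lt_nhds ht] with s hs
    simp [hs.le]
  · have hO : (fun s : ℝ => max s 0 ^ 2) =O[𝓝 0] fun s : ℝ => s ^ 2 := by
      refine Asymptotics.IsBigO.pow (Asymptotics.isBigO_of_le _ fun s => ?_) 2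
      simpa using abs_max_le_max_abs_abs (a := s) (b := 0)
    rw [max_self, mul_zero, hasDerivAt_iff_isLittleO_nhds_zero]
    simpa using hO.trans_isLittleO (Asymptotics.isLittleO_pow_id one_lt_two)
  · rw [max_eq_left ht.le]
    refine HasDerivAt.congr_of_eventuallyEq (f := (· ^ 2)) (by simpa using hasDerivAt_pow 2 t) ?_
    filter_upwards [eventually_gt_nhds ht] with s hs
    simp [hs.le]

theorem hasFDerivAt_quadraticPenalty {E : Type*} [NormedAddCommGroup E] [NormedSpace ℝ E]
    {g : ι → E → ℝ} {h : κ → E → ℝ} {g' : ι → StrongDual ℝ E} {h' : κ → StrongDual ℝ E} {x : E}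
    (hg : ∀ i, HasFDerivAt (g i) (g' i) x) (hh : ∀ j, HasFDerivAt (h j) (h' j) x) :
    HasFDerivAt (quadraticPenalty g h) (∑ i, max (g i x) 0 • g' i + ∑ j, h j x • h' j) x := by
  have hmax : ∀ i, HasFDerivAt (fun y => max (g i y) 0 ^ 2) ((2 * max (g i x) 0) • g' i) x :=
    fun i => (hasDerivAt_max_zero_sq (g i x)).comp_hasFDerivAt x (hg i)
  have hsq : ∀ j, HasFDerivAt (fun y => h j y ^ 2) ((2 * h j x) • h' j) x :=
    fun j => by simpa using (hh j).pow 2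
  have hsum := ((HasFDerivAt.fun_sum fun i (_ : i ∈ Finset.univ) => hmax i).add
    (HasFDerivAt.fun_sum fun j (_ : j ∈ Finset.univ) => hsq j)).mul_const 2⁻¹
  simp only [mul_smul, ← Finset.smul_sum, ← smul_add] at hsum
  simpa [quadraticPenalty, div_eq_mul_inv, Function.comp_def] using! hsum

end QuadraticPenalty

section Multipliers

theorem exists_strictMono_forall_sign_mul_nonneg {ι R : Type*} [Finite ι]
    [Ring R] [LinearOrder R] [IsOrderedRing R] (a : ℕ → ι → R) :
    ∃ (φ : ℕ → ℕ) (ε : ι → R), StrictMono φ ∧ (∀ j, ε j = 1 ∨ ε j = -1) ∧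
      ∀ k j, 0 ≤ ε j * a (φ k) j := by
  classical
  obtain ⟨s, hs⟩ : ∃ s : Set ι, ∃ᶠ k in atTop, {j | 0 ≤ a k j} = s :=
    frequently_exists.1 (Frequently.of_forall fun k => ⟨_, rfl⟩)
  obtain ⟨φ, hφ, hφs⟩ := extraction_of_frequently_atTop hs
  refine ⟨φ, fun j => if j ∈ s then 1 else -1, hφ, fun j => ite_eq_or_eq _ _ _, fun k j => ?_⟩
  have hmem : j ∈ s ↔ 0 ≤ a (φ k) j := by rw [← hφs k, Set.mem_ofPred_eq]
  by_cases hj : j ∈ s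
  · simpa [hj] using hmem.1 hj
  · simpa [hj] using (not_le.1 (mt hmem.2 hj)).le

variable {ι κ ν E : Type*} [Fintype ι] [Fintype κ] [Fintype ν]
  [NormedAddCommGroup E] [InnerProductSpace ℝ E]
  {f : ν → E → ℝ} {g : ι → E → ℝ} {h : κ → E → ℝ} {x x₀ : E}

theorem IsLocalWeakEfficientOn.exists_sum_gradient_penalized_eq [CompleteSpace E] {K : ℝ}
    (hx : IsLocalWeakEfficientOn
      (fun l y => f l y + K * quadraticPenalty g h y + ‖y - x₀‖ ^ 2 / 2) Set.univ x)
    (hf : ∀ l, DifferentiableAt ℝ (f l) x) (hg : ∀ i, DifferentiableAt ℝ (g i) x)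
    (hh : ∀ j, DifferentiableAt ℝ (h j) x) :
    ∃ w ∈ stdSimplex ℝ ν, ∑ l, w l • gradient (f l) x
      + ∑ i, (K * max (g i x) 0) • gradient (g i) x + ∑ j, (K * h j x) • gradient (h j) x
      = x₀ - x := by
  have hpenalty := (hasFDerivAt_quadraticPenalty (fun i => (hg i).hasFDerivAt)
    fun j => (hh j).hasFDerivAt).const_mul K
  have hproximal : HasFDerivAt (fun y => ‖y - x₀‖ ^ 2 / 2) (innerSL ℝ (x - x₀)) x := by
    simp only [div_eq_mul_inv]
    refine (((hasFDerivAt_id x).sub_const x₀).norm_sq.mul_const 2⁻¹).congr_fderiv ?_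
    ext
    simp
  obtain ⟨w, hw, hw0⟩ := hx.exists_mem_stdSimplex_sum_smul_eq_zero fun l =>
    ((hf l).hasFDerivAt.add hpenalty).add hproximal
  refine ⟨w, hw, (InnerProductSpace.toDual ℝ E).injective ?_⟩
  have hdual : InnerProductSpace.toDual ℝ E (x₀ - x) = -innerSL ℝ (x - x₀) := by
    ext; simp
  simp only [smul_add, Finset.sum_add_distrib, ← Finset.sum_smul, hw.2, one_smul] at hw0
  simp only [Finset.smul_sum, smul_smul] at hw0
  rw [hdual, ← sub_eq_zero, sub_neg_eq_add, ← hw0]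
  simp only [map_add, map_sum, map_smul, toDual_gradient, add_assoc]

theorem IsLocalWeakEfficientOn.exists_penalty_multipliers_near [FiniteDimensional ℝ E]
    (hx₀ : IsLocalWeakEfficientOn f (feasibleSet g h) x₀) (hx₀S : x₀ ∈ feasibleSet g h)
    (hf : ∀ l, ∀ᶠ y in 𝓝 x₀, DifferentiableAt ℝ (f l) y)
    (hg : ∀ i, ∀ᶠ y in 𝓝 x₀, DifferentiableAt ℝ (g i) y)
    (hh : ∀ j, ∀ᶠ y in 𝓝 x₀, DifferentiableAt ℝ (h j) y) {δ : ℝ} (hδ : 0 < δ) :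
    ∃ x ∈ Metric.ball x₀ δ, ∃ K > 0, ∃ w ∈ stdSimplex ℝ ν,
      ∑ l, w l • gradient (f l) x + ∑ i, (K * max (g i x) 0) • gradient (g i) x
        + ∑ j, (K * h j x) • gradient (h j) x = x₀ - x ∧
      ∀ l, f l x - f l x₀ + K * quadraticPenalty g h x ≤ 0 := by
  have := FiniteDimensional.proper ℝ E
  have := FiniteDimensional.complete ℝ E
  have := hx₀.nonempty hx₀S
  obtain ⟨ρ, hρ, hball⟩ := Metric.nhds_basis_closedBall.eventually_iff.1
    ((eventually_all.2 hf).and ((eventually_all.2 hg).and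
      ((eventually_all.2 hh).and (eventually_nhdsWithin_iff.1 hx₀))))
  have hsub : Metric.closedBall x₀ (min δ ρ) ⊆ Metric.closedBall x₀ ρ :=
    Metric.closedBall_subset_closedBall (min_le_right _ _)
  obtain ⟨K, hK, x, hx, hle, hloc⟩ := exists_penalized_isLocalWeakEfficientOn_univ
    (F := f) (P := quadraticPenalty g h) (lt_min hδ hρ)
    (fun l y hy => ((hball (hsub hy)).1 l).continuousAt.continuousWithinAt)
    (fun y hy => (hasFDerivAt_quadraticPenalty
      (fun i => ((hball (hsub hy)).2.1 i).hasFDerivAt)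
      fun j => ((hball (hsub hy)).2.2.1 j).hasFDerivAt).continuousAt.continuousWithinAt)
    (quadraticPenalty_nonneg g h) (quadraticPenalty_eq_zero_iff.2 hx₀S)
    fun y hy hPy => (hball (hsub hy)).2.2.2 (quadraticPenalty_eq_zero_iff.1 hPy)
  obtain ⟨hfx, hgx, hhx, -⟩ := hball (hsub (Metric.ball_subset_closedBall hx))
  obtain ⟨w, hw, hsum⟩ := hloc.exists_sum_gradient_penalized_eq hfx hgx hhx
  exact ⟨x, Metric.ball_subset_ball (min_le_left _ _) hx, K, hK, w, hw, hsum, hle⟩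

theorem IsLocalWeakEfficientOn.exists_seq_penalty_multipliers [FiniteDimensional ℝ E]
    (hx₀ : IsLocalWeakEfficientOn f (feasibleSet g h) x₀) (hx₀S : x₀ ∈ feasibleSet g h)
    (hf : ∀ l, ∀ᶠ y in 𝓝 x₀, DifferentiableAt ℝ (f l) y)
    (hg : ∀ i, ∀ᶠ y in 𝓝 x₀, DifferentiableAt ℝ (g i) y)
    (hh : ∀ j, ∀ᶠ y in 𝓝 x₀, DifferentiableAt ℝ (h j) y) :
    ∃ (x : ℕ → E) (K : ℕ → ℝ) (w : ℕ → ν → ℝ), Tendsto x atTop (𝓝 x₀) ∧ (∀ k, 0 < K k) ∧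
      (∀ k, w k ∈ stdSimplex ℝ ν) ∧
      (∀ k, ∑ l, w k l • gradient (f l) (x k)
        + ∑ i, (K k * max (g i (x k)) 0) • gradient (g i) (x k)
        + ∑ j, (K k * h j (x k)) • gradient (h j) (x k) = x₀ - x k) ∧
      ∀ k l, f l (x k) - f l x₀ + K k * quadraticPenalty g h (x k) ≤ 0 := by
  choose x hx K hK w hw hsum hle using fun k : ℕ =>
    hx₀.exists_penalty_multipliers_near hx₀S hf hg hh (Nat.one_div_pos_of_nat (α := ℝ) (n := k))
  refine ⟨x, K, w, tendsto_iff_dist_tendsto_zero.2 ?_, hK, hw, hsum, hle⟩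
  exact squeeze_zero (fun k => dist_nonneg) (fun k => (hx k).le)
    tendsto_one_div_add_atTop_nhds_zero_nat

end Multipliers

theorem akkt_necessary_smooth_E1_E2_general {ι κ ν E : Type*} [Fintype ι] [Fintype κ] [Fintype ν]
    [NormedAddCommGroup E] [InnerProductSpace ℝ E] [FiniteDimensional ℝ E]
    {f : ν → E → ℝ} {g : ι → E → ℝ} {h : κ → E → ℝ} {x₀ : E}
    (hf : ∀ l, ∀ᶠ y in 𝓝 x₀, DifferentiableAt ℝ (f l) y)
    (hg : ∀ i, ∀ᶠ y in 𝓝 x₀, DifferentiableAt ℝ (g i) y)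
    (hh : ∀ j, ∀ᶠ y in 𝓝 x₀, DifferentiableAt ℝ (h j) y)
    (hx₀S : x₀ ∈ feasibleSet g h) (hx₀ : IsLocalWeakEfficientOn f (feasibleSet g h) x₀) :
    ∃ (x : ℕ → E) (lam : ℕ → ν → ℝ) (mu : ℕ → ι → ℝ) (tau : ℕ → κ → ℝ)
      (b c : ℕ → ℝ) (eps : κ → ℝ),
      (∀ j, eps j = 1 ∨ eps j = -1) ∧
      (∀ k, 0 < b k) ∧ (∀ k, 0 < c k) ∧
      (∀ k l, 0 ≤ lam k l) ∧ (∀ k i, 0 ≤ mu k i) ∧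
      Tendsto x atTop (𝓝 x₀) ∧
      (∀ k, ∑ l, lam k l = 1) ∧
      Tendsto (fun k => ‖∑ l, lam k l • gradient (f l) (x k)
        + ∑ i, mu k i • gradient (g i) (x k)
        + ∑ j, (tau k j * eps j) • gradient (h j) (x k)‖) atTop (𝓝 0) ∧
      (∀ i, g i x₀ < 0 → ∀ᶠ k in atTop, mu k i = 0) ∧
      (∀ k i, mu k i = b k * max (g i (x k)) 0) ∧
      (∀ k j, tau k j = c k * (eps j * h j (x k)) ∧ 0 ≤ tau k j) ∧
      (∀ k l, f l (x k) - f l x₀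
        + (1 / 2) * (∑ i, mu k i * g i (x k)
          + ∑ j, tau k j * (eps j * h j (x k))) ≤ 0) := by
  obtain ⟨y, K, w, hy, hK, hw, hsum, hle⟩ := hx₀.exists_seq_penalty_multipliers hx₀S hf hg hh
  obtain ⟨φ, ε, hφ, hε, hsign⟩ := exists_strictMono_forall_sign_mul_nonneg fun k j => h j (y k)
  have hεε : ∀ j, ε j * ε j = 1 := fun j => mul_self_eq_one_iff.2 (hε j)
  have hx : Tendsto (y ∘ φ) atTop (𝓝 x₀) := hy.comp hφ.tendsto_atTop
  refine ⟨y ∘ φ, w ∘ φ, fun k i => K (φ k) * max (g i (y (φ k))) 0,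
    fun k j => K (φ k) * (ε j * h j (y (φ k))), K ∘ φ, K ∘ φ, ε, hε, fun k => hK _, fun k => hK _,
    fun k => (hw _).1, fun k i => mul_nonneg (hK _).le (le_max_right _ _), hx, fun k => (hw _).2,
    ?residual, ?inactive, fun k i => rfl,
    fun k j => ⟨rfl, mul_nonneg (hK _).le (hsign k j)⟩, fun k l => ?descent⟩
  case residual =>
    have hτ : ∀ k j, K (φ k) * (ε j * h j (y (φ k))) * ε j = K (φ k) * h j (y (φ k)) :=
      fun k j => by linear_combination K (φ k) * h j (y (φ k)) * hεε j
    simpa [hτ, hsum] using (hx.const_sub x₀).norm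
  case inactive =>
    intro i hi
    have hgx := (hg i).self_of_nhds.continuousAt.tendsto.comp hx
    filter_upwards [hgx.eventually_lt_const hi] with k hk
    rw [max_eq_right (show g i (y (φ k)) ≤ 0 from hk.le), mul_zero]
  case descent =>
    simpa only [Function.comp_apply, half_mul_sum_penalty_multipliers_mul_eq g h hεε]
      using hle (φ k) l

/-- **AKKT necessary optimality condition with the extra properties (E1), (E2)**
(smooth case). If `x̄` is a local weak efficient solution, then there are
sequences `{x^k}`, multipliers `(λ^k, μ^k, τ^k)`, positive reals `b_k, c_k`
and sign choices `ε_j ∈ {−1, 1}` satisfying (A0)–(A3), (E1) and (E2). -/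
theorem akkt_necessary_smooth_E1_E2
    {n p m r : ℕ} (hp : 0 < p)
    (f : Fin p → EuclideanSpace ℝ (Fin n) → ℝ)
    (g : Fin m → EuclideanSpace ℝ (Fin n) → ℝ)
    (h : Fin r → EuclideanSpace ℝ (Fin n) → ℝ)
    (hf : ∀ l, ContDiff ℝ 1 (f l))
    (hg : ∀ i, ContDiff ℝ 1 (g i))
    (hh : ∀ j, ContDiff ℝ 1 (h j))
    (xbar : EuclideanSpace ℝ (Fin n))
    (hxg : ∀ i, g i xbar ≤ 0) (hxh : ∀ j, h j xbar = 0)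
    (hweak : ∃ U ∈ 𝓝 xbar, ∀ x ∈ U,
      ((∀ i, g i x ≤ 0) ∧ (∀ j, h j x = 0)) → ¬ (∀ l, f l x < f l xbar)) :
    ∃ (x : ℕ → EuclideanSpace ℝ (Fin n))
      (lam : ℕ → Fin p → ℝ) (mu : ℕ → Fin m → ℝ) (tau : ℕ → Fin r → ℝ)
      (b c : ℕ → ℝ) (eps : Fin r → ℝ),
      (∀ j, eps j = 1 ∨ eps j = -1) ∧
      (∀ k, 0 < b k) ∧ (∀ k, 0 < c k) ∧
      (∀ k l, 0 ≤ lam k l) ∧ (∀ k i, 0 ≤ mu k i) ∧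
      -- (A0)
      Tendsto x atTop (𝓝 xbar) ∧
      -- (A2)
      (∀ k, ∑ l, lam k l = 1) ∧
      -- (A1)
      Tendsto (fun k => ‖∑ l, lam k l • gradient (f l) (x k)
        + ∑ i, mu k i • gradient (g i) (x k)
        + ∑ j, (tau k j * eps j) • gradient (h j) (x k)‖) atTop (𝓝 0) ∧
      -- (A3)
      (∀ i, g i xbar < 0 → ∀ᶠ k in atTop, mu k i = 0) ∧
      -- (E1)
      (∀ k i, mu k i = b k * max (g i (x k)) 0) ∧
      (∀ k j, tau k j = c k * (eps j * h j (x k)) ∧ 0 ≤ tau k j) ∧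
      -- (E2)
      (∀ k l, f l (x k) - f l xbar
        + (1 / 2) * (∑ i, mu k i * g i (x k)
          + ∑ j, tau k j * (eps j * h j (x k))) ≤ 0) :=
  akkt_necessary_smooth_E1_E2_general (fun l => .of_forall ((hf l).differentiable one_ne_zero))
    (fun i => .of_forall ((hg i).differentiable one_ne_zero))
    (fun j => .of_forall ((hh j).differentiable one_ne_zero))
    ⟨hxg, hxh⟩ (isLocalWeakEfficientOn_iff.2 hweak)
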